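/- Let the free group F be the free product F = F₁ ∗ F₂ (e.g., F is the free group on a disjoint union A₁ ⊔ A₂ of two sets, F₁ is the subgroup generated by A₁, and F₂ is the subgroup generated by A₂). Let H₁ ≤ F₁ and H₂ ≤ F₂ be finitely generated subgroups, and let H = ⟨H₁, H₂⟩ = H₁ ∗ H₂ ≤ F. Then dep(H) = H · (dep(H₁) ∪ dep(H₂)) · H, i.e., an element g ∈ F depends on H if and only if g = h₁ c h₂ for some h₁, h₂ ∈ H and some c that depends on H₁ or depends on H₂. -/

import Mathlib

open scoped Monoid.Coprod

variable {F : Type*}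

/-- The canonical homomorphism `φ_g : H ∗ ⟨x⟩ → F` from the free product of `H` with an
infinite cyclic group (the free group on one generator `x`), restricting to the inclusion
`H ↪ F` and sending `x` to `g`. -/
noncomputable def phi [Group F] (H : Subgroup F) (g : F) :
    (↥H ∗ FreeGroup Unit) →* F :=
  Monoid.Coprod.lift H.subtype (FreeGroup.lift fun _ => g)

/-- `g` depends on `H` (is algebraic over `H`) if `φ_g` is not injective. -/
def Depends [Group F] (H : Subgroup F) (g : F) : Prop :=
  ¬ Function.Injective (phi H g)

/-- `dep H`: the set of elements of `F` that depend on `H`. -/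
def depSet [Group F] (H : Subgroup F) : Set F := {g | Depends H g}

/-- `Dep H`: the subgroup generated by the elements that depend on `H`. -/
noncomputable def DepSubgroup [Group F] (H : Subgroup F) : Subgroup F :=
  Subgroup.closure (depSet H)

/-- The rank of a subgroup: the minimal cardinality of a generating set. For subgroups of
free groups this equals the cardinality of a free basis. -/
noncomputable def rk [Group F] (H : Subgroup F) : Cardinal :=
  ⨅ S : {S : Set F // Subgroup.closure S = H}, Cardinal.mk S.1


/-- `F` is the internal free product of its subgroups `F₁` and `F₂`: the canonical
homomorphism `F₁ ∗ F₂ → F` induced by the inclusions is bijective. -/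
def IsInternalFreeProduct [Group F] (F₁ F₂ : Subgroup F) : Prop :=
  Function.Bijective (Monoid.Coprod.lift F₁.subtype F₂.subtype)

/-!
Ping-pong on the reduced words of a free product of groups `M i`. Let `K` be the subgroup generated
by subgroups `H i ≤ M i`. Stripping letters in some `H i` off both ends of the reduced word of `g`
does not change the double coset `K g K`, and leads to a single letter or to a word `a ⋯ b` with
`a` and `b⁻¹` outside the subgroups `H i` and, after one more change of `b`, either equal or in
different right cosets of them.

In the case of `a ⋯ b`, if the element `c` spelled by this word has infinite order, its nontrivial
powers send every reduced word that starts with neither `a` nor `b⁻¹` to one that starts with one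
of the two, while nontrivial elements of `H i` send these to words starting with some letter of
`M i` other than `a` and `b⁻¹`; so `phi K c` is injective by ping-pong. An element of finite order
depends on every subgroup.

In the case of a single letter `x` of `M i`, `K ∗ ⟨x⟩` is the free product of `H i ∗ ⟨x⟩` and of
the other `H j`; if `x` does not depend on `H i`, these embed in the respective factors `M j`, so
`x` does not depend on `K`.
-/

open Function Monoid Monoid.CoprodI

section PingPong

variable {ι G P α : Type*} [Group G] [Group P] [MulAction P α]

theorem pow_succ_smul_mem {g : P} {A B : Set α} (hAB : Disjoint A B) (hg : ∀ v ∉ B, g • v ∈ A)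
    (n : ℕ) {v : α} (hv : v ∉ B) : g ^ (n + 1) • v ∈ A := by
  induction n with
  | zero => simpa using hg v hv
  | succ n ih =>
    rw [pow_succ', mul_smul]
    exact hg _ (hAB.notMem_of_mem_left ih)

theorem zpow_smul_mem_union {g : P} {A B : Set α} (hAB : Disjoint A B)
    (hg : ∀ v ∉ B, g • v ∈ A) {n : ℤ} (hn : n ≠ 0) {v : α} (hv : v ∉ A ∪ B) :
    g ^ n • v ∈ A ∪ B := by
  rw [Set.mem_union, not_or] at hv
  have hg_inv : ∀ v ∉ A, g⁻¹ • v ∈ B := fun v hvA => by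
    by_contra hvB
    exact hvA (by simpa using hg _ hvB)
  obtain ⟨k, rfl | rfl⟩ := n.eq_nat_or_neg
  all_goals obtain ⟨m, rfl⟩ := Nat.exists_eq_succ_of_ne_zero (n := k) (by simpa using hn)
  · exact .inl (by exact_mod_cast pow_succ_smul_mem hAB hg m hv.2)
  · rw [zpow_neg, ← inv_zpow]
    exact .inr (by exact_mod_cast pow_succ_smul_mem hAB.symm hg_inv m hv.1)

theorem lift_neWord_prod_smul_mem {N : ι → Type*} [∀ i, Group (N i)] {f : ∀ i, N i →* P}
    {X : ι → Set α} (hX : Pairwise (Disjoint on X))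
    (hf : ∀ i, ∀ h : N i, h ≠ 1 → ∀ v ∉ X i, f i h • v ∈ X i) {i j : ι} (w : NeWord N i j)
    {v : α} (hv : v ∉ X j) : lift f w.prod • v ∈ X i := by
  induction w generalizing v with
  | singleton h hh => simpa using hf _ h hh v hv
  | append w₁ hne w₂ ih₁ ih₂ =>
    rw [NeWord.append_prod, map_mul, mul_smul]
    exact ih₁ ((hX hne).notMem_of_mem_right (ih₂ hv))

/-- Compared with `Monoid.CoprodI.lift_injective_of_ping_pong`, the base point `p` outside all the
ping-pong sets replaces the assumptions on cardinalities. -/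
theorem injective_of_ping_pong (θ : G →* P) {J : ι → Subgroup G} (hJ : ⨆ i, J i = ⊤)
    {X : ι → Set α} (hX : Pairwise (Disjoint on X)) {p : α} (hp : ∀ i, p ∉ X i)
    (hθ : ∀ i, ∀ h ∈ J i, h ≠ 1 → ∀ v ∉ X i, θ h • v ∈ X i) : Injective θ := by
  classical
  have hsurj : Surjective (lift fun i => (J i).subtype) := by
    rw [← MonoidHom.range_eq_top, range_eq_iSup]
    simpa using hJ
  suffices Injective (lift fun i => θ.comp (J i).subtype) by
    have hlift : (lift fun i => θ.comp (J i).subtype) = θ.comp (lift fun i => (J i).subtype) := by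
      ext; simp
    rw [hlift, MonoidHom.coe_comp] at this
    exact this.of_comp_right hsurj
  refine (injective_iff_map_eq_one _).2 fun u hu => ?_
  obtain ⟨w, rfl⟩ := Word.equiv.symm.surjective u
  by_contra hw
  obtain ⟨i, j, w, rfl⟩ := NeWord.of_word w fun h => hw (by rw [h]; rfl)
  have hmem := lift_neWord_prod_smul_mem hX
    (f := fun i => θ.comp (J i).subtype)
    (fun i h hh v hv => hθ i (h : G) h.2 (by simpa using hh) v hv) w (hp j)
  refine hp i ?_
  rwa [show lift (fun i => θ.comp (J i).subtype) w.prod = 1 from hu, one_smul] at hmem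

end PingPong

section FirstLetter

variable {ι : Type*} {M : ι → Type*} [∀ i, Group (M i)]

/-- The set of reduced words whose first letter is `l`; these sets are the ping-pong tables. -/
def startingWith (l : Σ i, M i) : Set (Word M) := {w | w.toList.head? = some l}

theorem fstIdx_eq_of_mem_startingWith {l : Σ i, M i} {w : Word M} (hw : w ∈ startingWith l) :
    w.fstIdx = some l.1 := by
  rw [Word.fstIdx, show w.toList.head? = some l from hw, Option.map_some]

theorem exists_mem_startingWith {i : ι} {w : Word M} (hw : w.fstIdx = some i) :
    ∃ x : M i, w ∈ startingWith ⟨i, x⟩ := by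
  obtain ⟨⟨j, x⟩, hx, rfl⟩ := Option.map_eq_some_iff.1 hw
  exact ⟨x, hx⟩

theorem eq_of_mem_startingWith {l l' : Σ i, M i} {w : Word M} (hw : w ∈ startingWith l)
    (hw' : w ∈ startingWith l') : l = l' :=
  Option.some_inj.1 (hw.symm.trans hw')

theorem disjoint_startingWith {l l' : Σ i, M i} (h : l ≠ l') :
    Disjoint (startingWith l) (startingWith l') :=
  Set.disjoint_left.2 fun _ hw hw' => h (eq_of_mem_startingWith hw hw')

variable [DecidableEq ι] [∀ i, DecidableEq (M i)]

theorem of_smul_mem_startingWith {i : ι} {x : M i} {w : Word M} (hx : x ≠ 1)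
    (hw : w.fstIdx ≠ some i) : of x • w ∈ startingWith ⟨i, x⟩ := by
  rw [← Word.cons_eq_smul (h1 := hw) (h2 := hx)]
  rfl

theorem of_smul_mem_startingWith_mul {i : ι} {x a : M i} {w : Word M} (hxa : x * a ≠ 1)
    (hw : w ∈ startingWith ⟨i, a⟩) : of x • w ∈ startingWith ⟨i, x * a⟩ := by
  induction w using Word.consRecOn with
  | empty => simp [startingWith] at hw
  | cons j m w h1 h2 _ =>
    obtain ⟨rfl, hma⟩ := Sigma.mk.inj_iff.1 (Option.some_inj.1 hw)
    obtain rfl := eq_of_heq hma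
    rw [Word.cons_eq_smul, ← mul_smul, ← map_mul]
    exact of_smul_mem_startingWith hxa h1

theorem fstIdx_of_smul {i : ι} {x : M i} {w : Word M} (hx : x ≠ 1)
    (hw : w ∉ startingWith ⟨i, x⁻¹⟩) : (of x • w).fstIdx = some i := by
  by_cases hi : w.fstIdx = some i
  · obtain ⟨a, ha⟩ := exists_mem_startingWith hi
    have hxa : x * a ≠ 1 := fun h => hw (eq_inv_of_mul_eq_one_right h ▸ ha)
    exact fstIdx_eq_of_mem_startingWith (of_smul_mem_startingWith_mul hxa ha)
  · exact fstIdx_eq_of_mem_startingWith (of_smul_mem_startingWith hx hi)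

end FirstLetter

section Injectivity

variable {ι G : Type*} {M : ι → Type*} [∀ i, Group (M i)] [Group G]

theorem injective_of_map_eq_of {θ : G →* CoprodI M} {J : ι → Subgroup G} (hJ : ⨆ i, J i = ⊤)
    (hθ : ∀ i, ∀ x ∈ J i, x ≠ 1 → ∃ y : M i, y ≠ 1 ∧ θ x = of y) : Injective θ := by
  classical
  refine injective_of_ping_pong θ hJ (X := fun i => {w : Word M | w.fstIdx = some i})
    (fun i j hij => Set.disjoint_left.2 fun w hi hj => hij (Option.some_inj.1 (hi.symm.trans hj)))
    (p := Word.empty) (fun i => by simp [Word.fstIdx]) fun i x hx hx1 v hv => ?_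
  obtain ⟨y, hy, hxy⟩ := hθ i x hx hx1
  rw [hxy]
  exact fstIdx_eq_of_mem_startingWith (of_smul_mem_startingWith hy hv)

/-- The indexed free product of a pair of subgroups is their binary free product. -/
def coprodIBoolMulEquiv (A B : Subgroup G) : (CoprodI fun b => ↥(cond b A B)) ≃* A ∗ B :=
  MonoidHom.toMulEquiv
    (lift fun | true => Coprod.inl | false => Coprod.inr)
    (Coprod.lift (of (M := fun b => ↥(cond b A B)) (i := true))
      (of (M := fun b => ↥(cond b A B)) (i := false)))
    (by ext (_ | _) x <;> simp)
    (by ext x <;> simp)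

theorem coprodMap_injective {A B A' B' : Type*} [Group A] [Group B] [Group A'] [Group B']
    {f : A →* A'} {g : B →* B'} (hf : Injective f) (hg : Injective g) :
    Injective (Coprod.map f g) := by
  let R (b : Bool) := ↥(cond b (Coprod.inl : A' →* A' ∗ B').range Coprod.inr.range)
  let e : A' ∗ B' ≃* CoprodI R :=
    ((MonoidHom.ofInjective Coprod.inl_injective).coprodCongr
      (MonoidHom.ofInjective Coprod.inr_injective)).trans (coprodIBoolMulEquiv _ _).symm
  refine Injective.of_comp (f := e) ?_
  refine injective_of_map_eq_of (θ := e.toMonoidHom.comp (Coprod.map f g))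
    (J := fun b => cond b (Coprod.inl : A →* A ∗ B).range Coprod.inr.range)
    (by simp [iSup_bool_eq]) ?_
  rintro (_ | _) _ ⟨x, rfl⟩ hx
  · refine ⟨⟨Coprod.inr (g x), g x, rfl⟩, fun h => hx ?_, rfl⟩
    have hgx := (map_eq_one_iff _ Coprod.inr_injective).1 (congrArg Subtype.val h)
    rw [(map_eq_one_iff g hg).1 hgx, map_one]
  · refine ⟨⟨Coprod.inl (f x), f x, rfl⟩, fun h => hx ?_, rfl⟩
    have hfx := (map_eq_one_iff _ Coprod.inl_injective).1 (congrArg Subtype.val h)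
    rw [(map_eq_one_iff f hf).1 hfx, map_one]

end Injectivity

section ReducedLists

variable {ι : Type*} {M : ι → Type*} [∀ i, Group (M i)]

/-- A list of letters is reduced if it is the list of letters of a `Monoid.CoprodI.Word`. Lists
are used because the arguments below cut reduced words at both ends. -/
def IsReducedList (L : List (Σ i, M i)) : Prop :=
  (∀ l ∈ L, l.2 ≠ 1) ∧ L.IsChain fun l l' => l.1 ≠ l'.1

/-- The element of the free product spelled by a list of letters. -/
def listProd (L : List (Σ i, M i)) : CoprodI M := (L.map fun l => of l.2).prod

/-- The inverse of a letter. -/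
def letterInv (l : Σ i, M i) : Σ i, M i := ⟨l.1, l.2⁻¹⟩

@[simp]
theorem letterInv_letterInv (l : Σ i, M i) : letterInv (letterInv l) = l :=
  Sigma.ext rfl (by simp [letterInv])

@[simp]
theorem listProd_nil : listProd ([] : List (Σ i, M i)) = 1 := rfl

@[simp]
theorem listProd_cons (l : Σ i, M i) (L : List (Σ i, M i)) :
    listProd (l :: L) = of l.2 * listProd L := by
  simp [listProd]

@[simp]
theorem listProd_append (L L' : List (Σ i, M i)) :
    listProd (L ++ L') = listProd L * listProd L' := by
  simp [listProd]

theorem listProd_cons_append_letterInv (a : Σ i, M i) (L : List (Σ i, M i)) :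
    listProd (a :: (L ++ [letterInv a])) = of a.2 * listProd L * (of a.2)⁻¹ := by
  simp [letterInv, mul_assoc]

theorem IsReducedList.infix {L L' : List (Σ i, M i)} (hL : IsReducedList L) (h : L' <:+: L) :
    IsReducedList L' :=
  ⟨fun l hl => hL.1 l (h.subset hl), hL.2.infix h⟩

theorem IsReducedList.ne_one {L : List (Σ i, M i)} {l : Σ i, M i} (hL : IsReducedList L)
    (hl : l ∈ L) : l.2 ≠ 1 :=
  hL.1 l hl

theorem IsReducedList.fst_ne_fst {L : List (Σ i, M i)} {l l' : Σ i, M i} (hL : IsReducedList L)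
    (h : [l, l'] <:+: L) : l.1 ≠ l'.1 := by
  simpa using (hL.infix h).2

theorem IsReducedList.append_singleton_of_fst_eq {L : List (Σ i, M i)} {l l' : Σ i, M i}
    (hL : IsReducedList (L ++ [l])) (hfst : l'.1 = l.1) (hl' : l'.2 ≠ 1) :
    IsReducedList (L ++ [l']) := by
  refine ⟨fun x hx => ?_, ?_⟩
  · obtain hx | hx := List.mem_append.1 hx
    · exact hL.ne_one (List.mem_append_left _ hx)
    · rwa [List.mem_singleton.1 hx]
  · have hchain := hL.2
    simp only [List.isChain_append, List.isChain_singleton, List.head?_cons, Option.mem_some_iff,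
      forall_eq', true_and, hfst] at hchain ⊢
    exact hchain

theorem exists_isReducedList_listProd_eq (g : CoprodI M) :
    ∃ L : List (Σ i, M i), IsReducedList L ∧ listProd L = g := by
  classical
  obtain ⟨w, rfl⟩ := Word.equiv.symm.surjective g
  exact ⟨w.toList, ⟨w.ne_one, w.chain_ne⟩, rfl⟩

variable [DecidableEq ι] [∀ i, DecidableEq (M i)]

theorem IsReducedList.listProd_dropLast_smul_mem_startingWith {a b : Σ i, M i}
    {L : List (Σ i, M i)} (hL : IsReducedList (a :: (L ++ [b]))) {w : Word M}
    (hw : w.fstIdx = some b.1) : listProd (a :: L) • w ∈ startingWith a := by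
  induction L generalizing a with
  | nil =>
    have hab : b.1 ≠ a.1 := (hL.fst_ne_fst (l := a) (l' := b) List.infix_rfl).symm
    simpa using of_smul_mem_startingWith (hL.ne_one (by simp)) (by simpa [hw] using hab)
  | cons c L ih =>
    have hac : c.1 ≠ a.1 := (hL.fst_ne_fst (l' := c) ⟨[], L ++ [b], by simp⟩).symm
    have hc := fstIdx_eq_of_mem_startingWith (ih (a := c) (hL.infix ⟨[a], [], by simp⟩))
    rw [listProd_cons, mul_smul]
    exact of_smul_mem_startingWith (hL.ne_one (by simp)) (by rw [hc]; simpa using hac)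

theorem IsReducedList.listProd_smul_mem_startingWith {a b : Σ i, M i} {L : List (Σ i, M i)}
    (hL : IsReducedList (a :: (L ++ [b]))) {w : Word M} (hw : w ∉ startingWith (letterInv b)) :
    listProd (a :: (L ++ [b])) • w ∈ startingWith a := by
  rw [← List.cons_append, listProd_append, mul_smul]
  refine hL.listProd_dropLast_smul_mem_startingWith ?_
  simpa using fstIdx_of_smul (hL.ne_one (by simp)) hw

theorem conj_zpow_smul_mem_startingWith {u : CoprodI M} {n : ℤ} {a : Σ i, M i} (ha : a.2 ≠ 1)
    (hu : ∀ v : Word M, v.fstIdx = some a.1 → (u ^ n • v).fstIdx ≠ some a.1) {w : Word M}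
    (hw : w ∉ startingWith a) : (of a.2 * u * (of a.2)⁻¹) ^ n • w ∈ startingWith a := by
  rw [conj_zpow, mul_smul, mul_smul, ← map_inv]
  exact of_smul_mem_startingWith ha (hu _ (fstIdx_of_smul (inv_ne_one.2 ha) (by simpa using hw)))

/-- If the end letters do not cancel cyclically, this is ping-pong between the words starting with
the first letter and those starting with the inverse of the last one; if they do, it reduces to the
core `L` by conjugation. -/
theorem IsReducedList.zpow_listProd_smul_mem_of_core {a b : Σ i, M i} {L : List (Σ i, M i)}
    (hL : IsReducedList (a :: (L ++ [b]))) {n : ℤ} (hn : listProd (a :: (L ++ [b])) ^ n ≠ 1)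
    (hcore : b = letterInv a → listProd L ^ n ≠ 1 →
      ∀ v : Word M, v.fstIdx = some a.1 → (listProd L ^ n • v).fstIdx ≠ some a.1)
    {w : Word M} (hw : w ∉ startingWith a ∪ startingWith (letterInv b)) :
    listProd (a :: (L ++ [b])) ^ n • w ∈ startingWith a ∪ startingWith (letterInv b) := by
  by_cases hab : b = letterInv a
  · rw [hab, listProd_cons_append_letterInv] at hn ⊢
    have hn' : listProd L ^ n ≠ 1 := fun h => hn (by simp [conj_zpow, h])
    exact .inl (conj_zpow_smul_mem_startingWith (hL.ne_one (by simp)) (hcore hab hn')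
      fun h => hw (.inl h))
  · have hab' : a ≠ letterInv b := fun h => hab (by simp [h])
    have hn0 : n ≠ 0 := fun h => hn (by simp [h])
    exact zpow_smul_mem_union (disjoint_startingWith hab')
      (fun v hv => hL.listProd_smul_mem_startingWith hv) hn0 hw

theorem IsReducedList.fstIdx_zpow_listProd_smul_ne {a : Σ i, M i} {L : List (Σ i, M i)}
    (hL : IsReducedList (a :: (L ++ [letterInv a]))) {n : ℤ} (hn : listProd L ^ n ≠ 1)
    {w : Word M} (hw : w.fstIdx = some a.1) : (listProd L ^ n • w).fstIdx ≠ some a.1 := by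
  induction L using List.bidirectionalRec generalizing a w with
  | nil => simp at hn
  | singleton l =>
    have hla : l.1 ≠ a.1 := (hL.fst_ne_fst (l' := l) ⟨[], [letterInv a], by simp⟩).symm
    have hl : l.2 ^ n ≠ 1 := fun h => hn (by simp [← map_zpow, h])
    have hmem := of_smul_mem_startingWith hl (w := w) (by simpa [hw] using hla.symm)
    simpa [← map_zpow, fstIdx_eq_of_mem_startingWith hmem] using hla
  | cons_append a' L b' ih =>
    have ha' : a'.1 ≠ a.1 :=
      (hL.fst_ne_fst (l' := a') ⟨[], L ++ [b', letterInv a], by simp⟩).symm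
    have hb' : b'.1 ≠ a.1 :=
      hL.fst_ne_fst (l' := letterInv a) ⟨a :: a' :: L, [], by simp⟩
    have hL' : IsReducedList (a' :: (L ++ [b'])) := hL.infix ⟨[a], [letterInv a], by simp⟩
    have hindex {v : Word M} (hv : v ∈ startingWith a' ∪ startingWith (letterInv b')) :
        v.fstIdx ≠ some a.1 := by
      obtain hv | hv := hv <;> simpa [fstIdx_eq_of_mem_startingWith hv, letterInv]
    refine hindex (hL'.zpow_listProd_smul_mem_of_core hn ?_ fun h => hindex h hw)
    rintro rfl hn' v hv
    exact ih hL' hn' hv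

theorem IsReducedList.zpow_listProd_smul_mem {a b : Σ i, M i} {L : List (Σ i, M i)}
    (hL : IsReducedList (a :: (L ++ [b]))) {n : ℤ} (hn : listProd (a :: (L ++ [b])) ^ n ≠ 1)
    {w : Word M} (hw : w ∉ startingWith a ∪ startingWith (letterInv b)) :
    listProd (a :: (L ++ [b])) ^ n • w ∈ startingWith a ∪ startingWith (letterInv b) := by
  refine hL.zpow_listProd_smul_mem_of_core hn ?_ hw
  rintro rfl hn' v hv
  exact hL.fstIdx_zpow_listProd_smul_ne hn' hv

end ReducedLists

section Separated

variable {ι : Type*} {M : ι → Type*} [∀ i, Group (M i)]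

/-- A set of letters is separated by subgroups `H i ≤ M i` if its letters lie outside these
subgroups and in pairwise distinct right cosets of them. -/
structure IsSeparated (H : ∀ i, Subgroup (M i)) (T : Set (Σ i, M i)) : Prop where
  notMem : ∀ l ∈ T, l.2 ∉ H l.1
  eq_one : ∀ {i : ι} {k x : M i}, k ∈ H i → ⟨i, x⟩ ∈ T → ⟨i, k * x⟩ ∈ T → k = 1

variable {H : ∀ i, Subgroup (M i)}

theorem isSeparated_singleton {l : Σ i, M i} (hl : l.2 ∉ H l.1) : IsSeparated H {l} where
  notMem := by rintro _ rfl; exact hl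
  eq_one := by
    rintro i k x - rfl hkx
    simpa using hkx

theorem isSeparated_pair {l l' : Σ i, M i} (hl : l.2 ∉ H l.1) (hl' : l'.2 ∉ H l'.1)
    (hll' : ∀ k ∈ H l.1, (⟨l.1, k * l.2⟩ : Σ i, M i) ≠ l') : IsSeparated H {l, l'} where
  notMem := by rintro _ (rfl | rfl) <;> assumption
  eq_one := by
    rintro i k x hk (rfl | rfl) (hkx | hkx)
    · simpa using hkx
    · exact absurd hkx (hll' k hk)
    · subst hkx
      exact absurd (by simp) (hll' k⁻¹ (inv_mem hk))
    · simpa using hkx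

theorem IsSeparated.of_smul_mem [DecidableEq ι] [∀ i, DecidableEq (M i)] {T : Set (Σ i, M i)}
    (hT : IsSeparated H T) {i : ι} {k : M i} (hk : k ∈ H i) (hk1 : k ≠ 1) {w : Word M}
    (hw : w ∉ {w | w.fstIdx = some i} \ ⋃ l ∈ T, startingWith l) :
    of k • w ∈ {w : Word M | w.fstIdx = some i} \ ⋃ l ∈ T, startingWith l := by
  obtain ⟨x, hxT, hx⟩ : ∃ x : M i, ⟨i, x⟩ ∉ T ∧ of k • w ∈ startingWith ⟨i, x⟩ := by
    by_cases hi : w.fstIdx = some i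
    · have hwT : w ∈ ⋃ l ∈ T, startingWith l := by_contra fun h => hw ⟨hi, h⟩
      obtain ⟨⟨j, a⟩, haT, ha⟩ := Set.mem_iUnion₂.1 hwT
      obtain rfl : j = i := Option.some_inj.1 ((fstIdx_eq_of_mem_startingWith ha).symm.trans hi)
      have hka : k * a ≠ 1 := fun h =>
        hT.notMem _ haT (eq_inv_of_mul_eq_one_right h ▸ inv_mem hk)
      exact ⟨k * a, fun h => hk1 (hT.eq_one hk haT h), of_smul_mem_startingWith_mul hka ha⟩
    · exact ⟨k, fun h => hT.notMem _ h hk, of_smul_mem_startingWith hk1 hi⟩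
  refine ⟨fstIdx_eq_of_mem_startingWith hx, fun h => ?_⟩
  obtain ⟨l, hl, hl'⟩ := Set.mem_iUnion₂.1 h
  exact hxT (eq_of_mem_startingWith hx hl' ▸ hl)

end Separated

section Phi

variable {P Q : Type*} [Group P] [Group Q]

@[simp]
theorem phi_inl (H : Subgroup P) (g : P) (h : H) : phi H g (Coprod.inl h) = h := by
  simp [phi]

@[simp]
theorem phi_inr_of (H : Subgroup P) (g : P) (u : Unit) :
    phi H g (Coprod.inr (FreeGroup.of u)) = g := by
  simp [phi]

theorem phi_eq_comp_map_inclusion {H H' : Subgroup P} (hle : H ≤ H') (g : P) :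
    phi H g = (phi H' g).comp (Coprod.map (Subgroup.inclusion hle) (MonoidHom.id _)) := by
  ext <;> simp

theorem range_phi (H : Subgroup P) (g : P) :
    (phi H g).range = H ⊔ Subgroup.zpowers g := by
  rw [phi, Coprod.range_lift, Subgroup.range_subtype, FreeGroup.range_lift_eq_closure,
    Set.range_const, Subgroup.zpowers_eq_closure]

theorem iSup_range_inl_comp_inclusion_sup_range_inr {ι : Type*} (H : ι → Subgroup P) :
    (⨆ i, ((Coprod.inl : _ →* ↥(⨆ i, H i) ∗ Q).comp (Subgroup.inclusion (le_iSup H i))).range) ⊔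
      (Coprod.inr : Q →* ↥(⨆ i, H i) ∗ Q).range = ⊤ := by
  have hsup : ⨆ i, (Subgroup.inclusion (le_iSup H i)).range = ⊤ := by
    apply Subgroup.map_injective (⨆ i, H i).subtype_injective
    rw [Subgroup.map_iSup, ← MonoidHom.range_eq_map, Subgroup.range_subtype]
    simp_rw [MonoidHom.map_range, Subgroup.subtype_comp_inclusion, Subgroup.range_subtype]
  simp_rw [MonoidHom.range_comp]
  rw [← Subgroup.map_iSup, hsup, ← MonoidHom.range_eq_map, Coprod.range_inl_sup_range_inr]

theorem iSup_update_range_map_inclusion {ι : Type*} [DecidableEq ι] (H : ι → Subgroup P) (i : ι) :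
    ⨆ j, update
        (fun j =>
          ((Coprod.inl : _ →* ↥(⨆ i, H i) ∗ Q).comp (Subgroup.inclusion (le_iSup H j))).range)
        i (Coprod.map (Subgroup.inclusion (le_iSup H i)) (MonoidHom.id Q)).range j = ⊤ := by
  set B := Coprod.map (Subgroup.inclusion (le_iSup H i)) (MonoidHom.id Q) with hB
  rw [eq_top_iff, ← iSup_range_inl_comp_inclusion_sup_range_inr H, sup_le_iff, iSup_le_iff]
  refine ⟨fun j => ?_, le_iSup_of_le i ?_⟩
  · refine le_iSup_of_le j ?_
    obtain rfl | hj := eq_or_ne j i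
    · rw [update_self, hB,
        ← Coprod.map_comp_inl (Subgroup.inclusion (le_iSup H j)) (MonoidHom.id Q)]
      rw [MonoidHom.range_comp]
      exact Subgroup.map_le_range _ _
    · rw [update_of_ne hj]
  · rw [update_self]
    rintro _ ⟨u, rfl⟩
    exact ⟨Coprod.inr u, by simp [B]⟩

theorem exists_phi_inr_eq_zpow (H : Subgroup P) (g : P) {u : FreeGroup Unit} (hu : u ≠ 1) :
    ∃ n : ℤ, n ≠ 0 ∧ phi H g (Coprod.inr u) = g ^ n := by
  obtain ⟨n, rfl⟩ : ∃ n : ℤ, FreeGroup.of () ^ n = u :=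
    FreeGroup.freeGroupUnitEquivInt.symm.surjective u
  refine ⟨n, ?_, by simp⟩
  rintro rfl
  simp at hu

theorem injective_phi_of_ping_pong {ι α : Type*} [MulAction P α] {K : ι → Subgroup P} {g : P}
    {X : ι → Set α} {Y : Set α} (hX : Pairwise (Disjoint on X)) (hYX : ∀ i, Disjoint Y (X i))
    {p : α} (hpX : ∀ i, p ∉ X i) (hpY : p ∉ Y)
    (hK : ∀ i, ∀ k ∈ K i, k ≠ 1 → ∀ v ∉ X i, k • v ∈ X i)
    (hg : ∀ n : ℤ, n ≠ 0 → ∀ v ∉ Y, g ^ n • v ∈ Y) :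
    Injective (phi (⨆ i, K i) g) := by
  let A (i : ι) : K i →* ↥(⨆ i, K i) ∗ FreeGroup Unit :=
    Coprod.inl.comp (Subgroup.inclusion (le_iSup K i))
  refine injective_of_ping_pong (phi (⨆ i, K i) g)
    (J := fun o : Option ι => o.elim Coprod.inr.range fun i => (A i).range)
    (X := fun o : Option ι => o.elim Y X) (p := p) ?_ ?_ ?_ ?_
  · rw [iSup_option, sup_comm]
    exact iSup_range_inl_comp_inclusion_sup_range_inr _
  · rintro (_ | i) (_ | j) hij
    · exact absurd rfl hij
    · exact hYX j
    · exact (hYX i).symm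
    · exact hX fun h => hij (congrArg some h)
  · rintro (_ | i)
    exacts [hpY, hpX i]
  · rintro (_ | i) _ ⟨x, rfl⟩ hx v hv
    · have hx1 : x ≠ 1 := fun h => hx (by rw [h, map_one])
      obtain ⟨n, hn, hphi⟩ := exists_phi_inr_eq_zpow (⨆ i, K i) g hx1
      rw [hphi]
      exact hg n hn v hv
    · have hx1 : (x : P) ≠ 1 := fun h => hx (by rw [show x = 1 from Subtype.ext h, map_one])
      have hphi : phi (⨆ i, K i) g (A i x) = x := phi_inl _ _ _
      rw [hphi]
      exact hK i x x.2 hx1 v hv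

end Phi

section Independence

variable {ι : Type*} {M : ι → Type*} [∀ i, Group (M i)]
  [DecidableEq ι] [∀ i, DecidableEq (M i)] {H : ∀ i, Subgroup (M i)} {T : Set (Σ i, M i)}

theorem IsSeparated.injective_phi (hT : IsSeparated H T) {g : CoprodI M}
    (hg : ∀ n : ℤ, n ≠ 0 → ∀ w : Word M, w ∉ ⋃ l ∈ T, startingWith l →
      g ^ n • w ∈ ⋃ l ∈ T, startingWith l) :
    Injective (phi (⨆ i, (H i).map of) g) := by
  refine injective_phi_of_ping_pong
    (X := fun i => {w : Word M | w.fstIdx = some i} \ ⋃ l ∈ T, startingWith l)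
    (Y := ⋃ l ∈ T, startingWith l) (p := Word.empty) ?_ (fun i => Set.disjoint_sdiff_right)
    (fun i => by simp [Word.fstIdx, Word.empty]) (by simp [startingWith, Word.empty]) ?_ hg
  · exact fun i j hij => Set.disjoint_left.2 fun w hi hj =>
      hij (Option.some_inj.1 (hi.1.symm.trans hj.1))
  · rintro i _ ⟨k, hk, rfl⟩ hk1 w hw
    exact hT.of_smul_mem hk (fun h => hk1 (by rw [h, map_one])) hw

end Independence

section NormalForm

variable {ι : Type*} {M : ι → Type*} [∀ i, Group (M i)] {H : ∀ i, Subgroup (M i)}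

theorem of_mem_iSup_map_of {i : ι} {k : M i} (hk : k ∈ H i) :
    (of k : CoprodI M) ∈ ⨆ i, (H i).map of :=
  Subgroup.mem_iSup_of_mem i (Subgroup.mem_map_of_mem _ hk)

theorem doubleCoset_mul_left {G : Type*} [Group G] {K : Subgroup G} {k : G} (hk : k ∈ K) (g : G) :
    DoubleCoset.doubleCoset (k * g) K K = DoubleCoset.doubleCoset g K K :=
  DoubleCoset.doubleCoset_eq_of_mem
    (DoubleCoset.mem_doubleCoset.2 ⟨k, hk, 1, one_mem K, (mul_one _).symm⟩)

theorem doubleCoset_mul_right {G : Type*} [Group G] {K : Subgroup G} {k : G} (hk : k ∈ K) (g : G) :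
    DoubleCoset.doubleCoset (g * k) K K = DoubleCoset.doubleCoset g K K :=
  DoubleCoset.doubleCoset_eq_of_mem
    (DoubleCoset.mem_doubleCoset.2 ⟨1, one_mem K, k, hk, by rw [one_mul]⟩)

theorem IsReducedList.exists_isSeparated_mem_doubleCoset {a b : Σ i, M i} {L : List (Σ i, M i)}
    (hL : IsReducedList (a :: (L ++ [b]))) (ha : a.2 ∉ H a.1) (hb : b.2 ∉ H b.1) :
    ∃ b', IsReducedList (a :: (L ++ [b'])) ∧ IsSeparated H {a, letterInv b'} ∧
      listProd (a :: (L ++ [b'])) ∈ DoubleCoset.doubleCoset (listProd (a :: (L ++ [b])))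
        (⨆ i, (H i).map of : Subgroup (CoprodI M)) (⨆ i, (H i).map of : Subgroup (CoprodI M)) := by
  by_cases hab : ∃ k ∈ H a.1, (⟨a.1, k * a.2⟩ : Σ i, M i) = letterInv b
  · obtain ⟨k, hk, hkb⟩ := hab
    obtain rfl : letterInv ⟨a.1, k * a.2⟩ = b := by rw [hkb, letterInv_letterInv]
    have hprod : listProd (a :: (L ++ [letterInv ⟨a.1, k * a.2⟩])) =
        listProd (a :: (L ++ [letterInv a])) * of k⁻¹ := by
      simp [letterInv, mul_assoc]
    refine ⟨letterInv a, ?_, by simpa using isSeparated_singleton ha, ?_⟩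
    · exact IsReducedList.append_singleton_of_fst_eq (L := a :: L) hL rfl
        (inv_ne_one.2 (hL.ne_one (by simp)))
    · rw [hprod, doubleCoset_mul_right (of_mem_iSup_map_of (inv_mem hk))]
      exact DoubleCoset.mem_doubleCoset_self _ _ _
  · push Not at hab
    exact ⟨b, hL, isSeparated_pair ha (fun h => hb ((H b.1).inv_mem_iff.1 h)) hab,
      DoubleCoset.mem_doubleCoset_self _ _ _⟩

theorem IsReducedList.exists_mem_doubleCoset [Nonempty ι] (H : ∀ i, Subgroup (M i))
    {L : List (Σ i, M i)} (hL : IsReducedList L) :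
    ∃ c ∈ DoubleCoset.doubleCoset (listProd L) (⨆ i, (H i).map of : Subgroup (CoprodI M))
        (⨆ i, (H i).map of : Subgroup (CoprodI M)),
      (∃ i, ∃ x : M i, c = of x) ∨
        ∃ a L' b, IsReducedList (a :: (L' ++ [b])) ∧ IsSeparated H {a, letterInv b} ∧
          c = listProd (a :: (L' ++ [b])) := by
  induction hlen : L.length using Nat.strong_induction_on generalizing L with
  | _ n ih =>
  subst hlen
  cases L using List.bidirectionalRec with
  | nil =>
    inhabit ι
    exact ⟨1, DoubleCoset.mem_doubleCoset_self _ _ _, .inl ⟨default, 1, by simp⟩⟩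
  | singleton l => exact ⟨_, DoubleCoset.mem_doubleCoset_self _ _ _, .inl ⟨l.1, l.2, by simp⟩⟩
  | cons_append a L b =>
    by_cases ha : a.2 ∈ H a.1
    · rw [listProd_cons, doubleCoset_mul_left (of_mem_iSup_map_of ha)]
      exact ih _ (by simp) (hL.infix ⟨[a], [], by simp⟩) rfl
    by_cases hb : b.2 ∈ H b.1
    · have hprod : listProd (a :: (L ++ [b])) = listProd (a :: L) * of b.2 := by
        simp [mul_assoc]
      rw [hprod, doubleCoset_mul_right (of_mem_iSup_map_of hb)]
      exact ih _ (by simp) (hL.infix ⟨[], [b], by simp⟩) rfl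
    obtain ⟨b', hL', hab', hmem⟩ := hL.exists_isSeparated_mem_doubleCoset ha hb
    exact ⟨_, hmem, .inr ⟨a, L, b', hL', hab', rfl⟩⟩

theorem IsReducedList.injective_phi_listProd {a b : Σ i, M i} {L : List (Σ i, M i)}
    (hL : IsReducedList (a :: (L ++ [b]))) (hab : IsSeparated H {a, letterInv b})
    (hfin : ¬IsOfFinOrder (listProd (a :: (L ++ [b])))) :
    Injective (phi (⨆ i, (H i).map of) (listProd (a :: (L ++ [b])))) := by
  classical
  refine hab.injective_phi fun n hn w hw => ?_
  rw [Set.biUnion_pair] at hw ⊢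
  exact hL.zpow_listProd_smul_mem
    (fun h => hfin (isOfFinOrder_iff_zpow_eq_one.2 ⟨n, hn, h⟩)) hw

end NormalForm

section Depends

variable {P Q : Type*} [Group P] [Group Q] {H H' : Subgroup P} {g : P}

theorem depends_mul_mul_iff {h h' : P} (hh : h ∈ H) (hh' : h' ∈ H) :
    Depends H (h * g * h') ↔ Depends H g := by
  let α (k k' : H) : H ∗ FreeGroup Unit →* H ∗ FreeGroup Unit :=
    Coprod.lift Coprod.inl (FreeGroup.lift fun _ =>
      Coprod.inl k * Coprod.inr (FreeGroup.of ()) * Coprod.inl k')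
  let k : H := ⟨h, hh⟩
  let k' : H := ⟨h', hh'⟩
  let e : H ∗ FreeGroup Unit ≃* H ∗ FreeGroup Unit :=
    MonoidHom.toMulEquiv (α k k') (α k⁻¹ k'⁻¹)
      (by ext <;> simp [α, mul_assoc]) (by ext <;> simp [α, mul_assoc])
  have hphi : phi H (h * g * h') = (phi H g).comp e.toMonoidHom := by
    ext <;> simp [e, α, k, k']
  rw [Depends, Depends, hphi, MonoidHom.coe_comp]
  exact not_congr (EquivLike.injective_comp e (phi H g))

theorem Depends.mono (hle : H ≤ H') (hg : Depends H g) : Depends H' g := by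
  rw [Depends, phi_eq_comp_map_inclusion hle, MonoidHom.coe_comp] at hg
  exact fun hinj =>
    hg (hinj.comp (coprodMap_injective (Subgroup.inclusion_injective hle) injective_id))

theorem depends_map_iff {f : P →* Q} (hf : Injective f) :
    Depends (H.map f) (f g) ↔ Depends H g := by
  let e := (H.equivMapOfInjective f hf).coprodCongr (MulEquiv.refl (FreeGroup Unit))
  have hphi : (phi (H.map f) (f g)).comp e.toMonoidHom = f.comp (phi H g) := by
    ext <;> simp [e]
  rw [Depends, Depends, ← hf.of_comp_iff, ← EquivLike.injective_comp e]
  exact not_congr (Iff.of_eq (congrArg _ (congrArg DFunLike.coe hphi)))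

theorem depends_of_isOfFinOrder (H : Subgroup P) (hg : IsOfFinOrder g) : Depends H g := by
  obtain ⟨n, hn, hgn⟩ := isOfFinOrder_iff_zpow_eq_one.1 hg
  intro hinj
  have hx : (Coprod.inr (FreeGroup.of () ^ n) : H ∗ FreeGroup Unit) = 1 :=
    hinj (by simp [hgn])
  have hpow := (map_eq_one_iff _ Coprod.inr_injective).1 hx
  exact hn (by simpa using congrArg FreeGroup.freeGroupUnitEquivInt hpow)

end Depends

section Family

variable {ι : Type*}

theorem Depends.of_iSup_map_of {M : ι → Type*} [∀ i, Group (M i)] {H : ∀ i, Subgroup (M i)} {i : ι}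
    {x : M i} (hx : Depends (⨆ j, (H j).map of) (of x)) :
    Depends ((H i).map of) (of x : CoprodI M) := by
  classical
  intro hinj
  let K (j : ι) : Subgroup (CoprodI M) := (H j).map of
  let A (j : ι) : K j →* ↥(⨆ j, K j) ∗ FreeGroup Unit :=
    Coprod.inl.comp (Subgroup.inclusion (le_iSup K j))
  let B : K i ∗ FreeGroup Unit →* ↥(⨆ j, K j) ∗ FreeGroup Unit :=
    Coprod.map (Subgroup.inclusion (le_iSup K i)) (MonoidHom.id _)
  have hphiB (z : K i ∗ FreeGroup Unit) : phi (⨆ j, K j) (of x) (B z) = phi (K i) (of x) z := by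
    rw [phi_eq_comp_map_inclusion (le_iSup K i), MonoidHom.comp_apply]
  have hrange : (phi (K i) (of x)).range ≤ (of : M i →* CoprodI M).range := by
    rw [range_phi, sup_le_iff, Subgroup.zpowers_le]
    exact ⟨Subgroup.map_le_range _ _, x, rfl⟩
  refine hx (injective_of_map_eq_of (J := update (fun j => (A j).range) i B.range) ?_ ?_)
  · exact iSup_update_range_map_inclusion K i
  · intro j y hy hy1
    obtain rfl | hj := eq_or_ne j i
    · rw [update_self] at hy
      obtain ⟨z, rfl⟩ := hy
      obtain ⟨m, hm⟩ := hrange ⟨z, rfl⟩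
      refine ⟨m, ?_, (hphiB z).trans hm.symm⟩
      rintro rfl
      exact hy1 (by rw [hinj (hm.symm.trans (by simp) : _ = phi (K j) (of x) 1), map_one])
    · rw [update_of_ne hj] at hy
      obtain ⟨⟨_, k, hk, rfl⟩, rfl⟩ := hy
      refine ⟨k, ?_, phi_inl _ _ _⟩
      rintro rfl
      exact hy1 ((map_eq_one_iff (A j) (Coprod.inl_injective.comp
        (Subgroup.inclusion_injective _))).2 (Subtype.ext (map_one of)))

theorem depends_iSup_map_of_iff [Nonempty ι] {M : ι → Type*} [∀ i, Group (M i)]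
    (H : ∀ i, Subgroup (M i)) {g : CoprodI M} :
    Depends (⨆ i, (H i).map of) g ↔
      ∃ h ∈ ⨆ i, (H i).map of, ∃ h' ∈ ⨆ i, (H i).map of,
        ∃ c, (∃ i, Depends ((H i).map of) c) ∧ g = h * c * h' := by
  let K (i : ι) : Subgroup (CoprodI M) := (H i).map of
  change Depends (⨆ i, K i) g ↔
    ∃ h ∈ ⨆ i, K i, ∃ h' ∈ ⨆ i, K i, ∃ c, (∃ i, Depends (K i) c) ∧ g = h * c * h'
  constructor
  · intro hg
    obtain ⟨L, hL, rfl⟩ := exists_isReducedList_listProd_eq g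
    obtain ⟨c, hcmem, hc⟩ := hL.exists_mem_doubleCoset H
    obtain ⟨h, hh, h', hh', rfl⟩ := DoubleCoset.mem_doubleCoset.1 hcmem
    refine ⟨h⁻¹, inv_mem hh, h'⁻¹, inv_mem hh', h * listProd L * h', ?_, by group⟩
    have hdep : Depends (⨆ i, K i) (h * listProd L * h') := (depends_mul_mul_iff hh hh').2 hg
    obtain ⟨i, x, hx⟩ | ⟨a, L', b, hL', hab, hc⟩ := hc
    · rw [hx] at hdep ⊢
      exact ⟨i, hdep.of_iSup_map_of⟩
    · have hfin : IsOfFinOrder (h * listProd L * h') := by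
        by_contra hfin
        rw [hc] at hdep hfin
        exact hdep (hL'.injective_phi_listProd hab hfin)
      exact ⟨a.1, depends_of_isOfFinOrder _ hfin⟩
  · rintro ⟨h, hh, h', hh', c, ⟨i, hc⟩, rfl⟩
    exact (depends_mul_mul_iff hh hh').2 (hc.mono (le_iSup K i))

theorem depends_iSup_iff [Nonempty ι] {P : Type*} [Group P] {K H : ι → Subgroup P}
    (hK : Bijective (lift fun i => (K i).subtype)) (hle : ∀ i, H i ≤ K i) {g : P} :
    Depends (⨆ i, H i) g ↔
      ∃ h ∈ ⨆ i, H i, ∃ h' ∈ ⨆ i, H i,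
        ∃ c, (∃ i, Depends (H i) c) ∧ g = h * c * h' := by
  let e : (CoprodI fun i => K i) ≃* P := MulEquiv.ofBijective _ hK
  let N (i : ι) : Subgroup (CoprodI fun i => K i) := ((H i).subgroupOf (K i)).map of
  have hN (i : ι) : (N i).map e.toMonoidHom = H i := by
    have he : e.toMonoidHom.comp of = (K i).subtype := by ext; simp [e]
    rw [Subgroup.map_map, he, Subgroup.map_subgroupOf_eq_of_le (hle i)]
  have hdep (i : ι) (c : CoprodI fun i => K i) : Depends (H i) (e c) ↔ Depends (N i) c := by
    rw [← hN]
    exact depends_map_iff e.injective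
  have hsup : ⨆ i, H i = (⨆ i, N i).map e.toMonoidHom := by
    simp_rw [Subgroup.map_iSup, hN]
  obtain ⟨g, rfl⟩ := e.surjective g
  have hdepg : Depends (⨆ i, H i) (e g) ↔ Depends (⨆ i, N i) g := by
    rw [hsup]
    exact depends_map_iff e.injective
  have hmem (h : CoprodI fun i => K i) : e h ∈ ⨆ i, H i ↔ h ∈ ⨆ i, N i := by
    rw [hsup]
    exact Subgroup.mem_map_iff_mem e.injective
  rw [hdepg, depends_iSup_map_of_iff]
  simp only [e.surjective.exists, hmem, hdep, ← map_mul, e.injective.eq_iff, N]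

end Family

theorem IsInternalFreeProduct.bijective_lift {P : Type*} [Group P] {A B : Subgroup P}
    (h : IsInternalFreeProduct A B) : Bijective (lift fun b => (cond b A B).subtype) := by
  have hlift : (lift fun b => (cond b A B).subtype) =
      (Coprod.lift A.subtype B.subtype).comp (coprodIBoolMulEquiv A B).toMonoidHom := by
    ext (_ | _) x <;> simp [coprodIBoolMulEquiv]
  rw [hlift, MonoidHom.coe_comp]
  exact h.comp (coprodIBoolMulEquiv A B).bijective

theorem depSet_free_product_general [Group F] {F₁ F₂ H₁ H₂ : Subgroup F}
    (hF : IsInternalFreeProduct F₁ F₂) (hle₁ : H₁ ≤ F₁) (hle₂ : H₂ ≤ F₂) (g : F) :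
    Depends (H₁ ⊔ H₂) g ↔
      ∃ h₁ ∈ H₁ ⊔ H₂, ∃ h₂ ∈ H₁ ⊔ H₂, ∃ c : F,
        (Depends H₁ c ∨ Depends H₂ c) ∧ g = h₁ * c * h₂ := by
  have hle (b : Bool) : cond b H₁ H₂ ≤ cond b F₁ F₂ := by cases b <;> assumption
  simpa only [iSup_bool_eq, Bool.exists_bool' true, Bool.not_true, cond_true, cond_false] using
    depends_iSup_iff hF.bijective_lift hle (g := g)

/-- if `F = F₁ ∗ F₂`, `H₁ ≤ F₁`, `H₂ ≤ F₂` are finitely generated, and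
`H = ⟨H₁, H₂⟩`, then `g` depends on `H` iff `g = h₁ c h₂` with `h₁, h₂ ∈ H` and `c`
depending on `H₁` or on `H₂`. -/
theorem depSet_free_product [Group F] [IsFreeGroup F] (F₁ F₂ : Subgroup F)
    (hF : IsInternalFreeProduct F₁ F₂)
    (H₁ H₂ : Subgroup F) (hle₁ : H₁ ≤ F₁) (hle₂ : H₂ ≤ F₂)
    (hfg₁ : H₁.FG) (hfg₂ : H₂.FG) :
    ∀ g : F, Depends (H₁ ⊔ H₂) g ↔
      ∃ h₁ ∈ H₁ ⊔ H₂, ∃ h₂ ∈ H₁ ⊔ H₂, ∃ c : F,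
        (Depends H₁ c ∨ Depends H₂ c) ∧ g = h₁ * c * h₂ :=
  depSet_free_product_general hF hle₁ hle₂
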